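/- Let α, β, γ, δ be positive roots of A_{n−1} (repetitions allowed) and let w ∈ S_n be such that μ = w·(−α−β−γ−δ) = w(−α−β−γ−δ+ρ) − ρ is dominant. If n ≥ 7, then μ = 0. If n = 6, then μ ∈ {0, (1,1,1,−1,−1,−1)}, and if μ = (1,1,1,−1,−1,−1) = α_1+2α_2+3α_3+2α_4+α_5 then α = β = γ = δ = α_3 = e_3 − e_4 and ℓ(w) = 5. -/

import Mathlib

/-!
A weight `μ = w·λ`, with `λ` a sum of negative roots, has coordinate sum zero. If it is dominant
and nonzero, its first coordinate is thus at least `1` and its last at most `-1`. Put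
`k = w⁻¹(first)` and `m = w⁻¹(last)` (indices counted from `0`). Comparing with `ρ` gives
`λ_k ≥ k + 1` and `-λ_m ≥ n - m`. When `λ = -(α+β+γ+δ)`, each of the four roots contributes at
most `1` to `λ_k` and at most `1` to `-λ_m`; hence `k ≤ 3` and `m ≥ n - 4`.

If `k ≤ m`, no root contributes to both, so `(k + 1) + (n - m) ≤ 4`. As `k ≥ 1` and `m ≤ n - 2`,
the roots are two copies of `e_0 - e_1` and two of `e_{n-2} - e_{n-1}`. But then `λ + ρ` takes the
value `n - 3` at both `0` and `2`, which is impossible since `λ + ρ` is a permutation of the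
strictly decreasing `μ + ρ`. If `m < k`, then `n - 4 ≤ m < k ≤ 3` excludes `n ≥ 7`, and for `n = 6`
leaves only `m = 2`, `k = 3`, with all four roots contributing to both, i.e. equal to `e_2 - e_3`.
Then `λ + ρ = (5, 4, -1, 6, 1, 0)`, and sorting it determines both `μ` and `w`.
-/


/-- ρ = (n−1, n−2, …, 1, 0) for type A_{n−1} realized in ℤ^n. -/
def weylRho (n : ℕ) : Fin n → ℤ := fun i => (n : ℤ) - 1 - (i : ℕ)

/-- The action of `w ∈ S_n` on weights: `w(λ)_i = λ_{w⁻¹(i)}`. -/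
def wAct {n : ℕ} (w : Equiv.Perm (Fin n)) (lam : Fin n → ℤ) : Fin n → ℤ :=
  fun i => lam (w⁻¹ i)

/-- The dot action `w·λ = w(λ+ρ) − ρ`. -/
def dotAct {n : ℕ} (w : Equiv.Perm (Fin n)) (lam : Fin n → ℤ) : Fin n → ℤ :=
  fun i => lam (w⁻¹ i) + weylRho n (w⁻¹ i) - weylRho n i

/-- `λ` is dominant iff `λ_1 ≥ λ_2 ≥ ⋯ ≥ λ_n`. -/
def IsDominant {n : ℕ} (lam : Fin n → ℤ) : Prop :=
  ∀ i j : Fin n, i ≤ j → lam j ≤ lam i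

/-- The root `e_i − e_j`. -/
def posRoot {n : ℕ} (i j : Fin n) : Fin n → ℤ :=
  fun k => (if k = i then 1 else 0) - (if k = j then 1 else 0)

/-- Positive roots of A_{n−1}: `e_i − e_j` with `i < j`. -/
def IsPosRoot {n : ℕ} (x : Fin n → ℤ) : Prop :=
  ∃ i j : Fin n, i < j ∧ x = posRoot i j

/-- Negative roots of A_{n−1}. -/
def IsNegRoot {n : ℕ} (x : Fin n → ℤ) : Prop :=
  ∃ i j : Fin n, i < j ∧ x = -(posRoot i j)

/-- The length ℓ(w): the number of positive roots sent to negative roots by `w`,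
i.e. the number of inversions of `w`. -/
def weylLen {n : ℕ} (w : Equiv.Perm (Fin n)) : ℕ :=
  (Finset.univ.filter (fun p : Fin n × Fin n => p.1 < p.2 ∧ w p.2 < w p.1)).card

/-- `λ + ρ` is injective whenever `w·λ` is dominant. -/
lemma shifted_injective {n : ℕ} (lam : Fin n → ℤ) (w : Equiv.Perm (Fin n))
    (hdom : IsDominant (dotAct w lam)) (x y : Fin n)
    (h : lam x + weylRho n x = lam y + weylRho n y) : x = y := by
  have key : ∀ a b : Fin n, lam a + weylRho n a = lam b + weylRho n b → w a ≤ w b → a = b := by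
    intro a b hab hle
    have h1 := hdom _ _ hle
    have hinv : ∀ x, w⁻¹ (w x) = x := w.symm_apply_apply
    simp only [dotAct, hinv] at h1
    simp only [weylRho] at h1 hab
    apply w.injective
    apply Fin.ext
    have h2 : (w a : ℕ) ≤ (w b : ℕ) := hle
    omega
  rcases le_total (w x) (w y) with hle | hle
  · exact key x y h hle
  · exact (key y x h.symm hle).symm

lemma sum_posRoot {n : ℕ} {x : Fin n → ℤ} (hx : IsPosRoot x) : ∑ k, x k = 0 := by
  obtain ⟨i, j, -, rfl⟩ := hx
  simp [posRoot]

lemma sum_dotAct {n : ℕ} (lam : Fin n → ℤ) (w : Equiv.Perm (Fin n)) :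
    ∑ k, dotAct w lam k = ∑ k, lam k := by
  simp only [dotAct, Finset.sum_sub_distrib, Finset.sum_add_distrib]
  rw [Equiv.sum_comp w⁻¹ lam, Equiv.sum_comp w⁻¹ (weylRho n)]
  ring

/-- A nonzero dominant weight of coordinate sum zero starts positive and ends negative. -/
lemma dominant_ends {n : ℕ} (mu : Fin n → ℤ) (hdom : IsDominant mu) (hs : ∑ k, mu k = 0)
    (hne : mu ≠ 0) (f l : Fin n) (hf : (f : ℕ) = 0) (hl : (l : ℕ) + 1 = n) :
    1 ≤ mu f ∧ mu l ≤ -1 := by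
  constructor
  · by_contra hcon
    apply hne
    have hle : ∀ k ∈ Finset.univ, mu k ≤ 0 := fun k _ => by
      have := hdom f k (by rw [Fin.le_def]; omega)
      omega
    funext k
    exact (Finset.sum_eq_zero_iff_of_nonpos hle).1 hs k (Finset.mem_univ k)
  · by_contra hcon
    apply hne
    have hle : ∀ k ∈ Finset.univ, 0 ≤ mu k := fun k _ => by
      have := hdom k l (by rw [Fin.le_def]; omega)
      omega
    funext k
    exact (Finset.sum_eq_zero_iff_of_nonneg hle).1 hs k (Finset.mem_univ k)

lemma posRoot_bounds {n : ℕ} {x : Fin n → ℤ} (hx : IsPosRoot x) (k : Fin n) :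
    -1 ≤ x k ∧ x k ≤ 1 := by
  obtain ⟨i, j, -, rfl⟩ := hx
  simp only [posRoot]
  split_ifs <;> omega

lemma posRoot_first {n : ℕ} {x : Fin n → ℤ} (hx : IsPosRoot x) (k : Fin n) (hk : (k : ℕ) = 0) :
    0 ≤ x k := by
  obtain ⟨i, j, hij, rfl⟩ := hx
  simp only [posRoot, Fin.ext_iff]
  rw [Fin.lt_def] at hij
  split_ifs <;> omega

lemma posRoot_last {n : ℕ} {x : Fin n → ℤ} (hx : IsPosRoot x) (k : Fin n)
    (hk : (k : ℕ) + 1 = n) : x k ≤ 0 := by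
  obtain ⟨i, j, hij, rfl⟩ := hx
  simp only [posRoot, Fin.ext_iff]
  rw [Fin.lt_def] at hij
  split_ifs <;> omega

/-- A positive root cannot be negative at `k` and positive at `m` when `k ≤ m`. -/
lemma posRoot_disjoint {n : ℕ} {x : Fin n → ℤ} (hx : IsPosRoot x) (k m : Fin n)
    (hkm : (k : ℕ) ≤ m) : x m - x k ≤ 1 := by
  obtain ⟨i, j, hij, rfl⟩ := hx
  simp only [posRoot, Fin.ext_iff]
  rw [Fin.lt_def] at hij
  split_ifs <;> omega

/-- A positive root with `x_{n-2} - x_1 = 1` is `e_0 - e_1` or `e_{n-2} - e_{n-1}`; either way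
`x_0 = -x_1` and `x_2 = 0`. -/
lemma posRoot_extreme {n : ℕ} (hn : 5 ≤ n) {x : Fin n → ℤ} (hx : IsPosRoot x)
    (z k t m : Fin n) (hz : (z : ℕ) = 0) (hk : (k : ℕ) = 1) (ht : (t : ℕ) = 2)
    (hm : (m : ℕ) + 2 = n) (h : x m - x k = 1) : x z = -x k ∧ x t = 0 := by
  obtain ⟨i, j, hij, rfl⟩ := hx
  simp only [posRoot, Fin.ext_iff] at h ⊢
  rw [Fin.lt_def] at hij
  have := i.isLt
  have := j.isLt
  split_ifs at h ⊢ <;> omega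

lemma posRoot_eq {n : ℕ} {x : Fin n → ℤ} (hx : IsPosRoot x) (i j : Fin n)
    (hi : x i = 1) (hj : x j = -1) : x = posRoot i j := by
  obtain ⟨i', j', hij, rfl⟩ := hx
  have h1 : i = i' := by
    by_contra hne
    simp only [posRoot, if_neg hne] at hi
    split_ifs at hi <;> omega
  have h2 : j = j' := by
    by_contra hne
    simp only [posRoot, if_neg hne] at hj
    split_ifs at hj <;> omega
  rw [h1, h2]

/-- For `n ≥ 6`, a nonzero dominant `μ` forces `n = 6` and all four roots equal to `e_2 - e_3`. -/
lemma nonzero_case {n : ℕ} (hn : 6 ≤ n) (α β γ δ : Fin n → ℤ)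
    (hα : IsPosRoot α) (hβ : IsPosRoot β) (hγ : IsPosRoot γ) (hδ : IsPosRoot δ)
    (w : Equiv.Perm (Fin n))
    (hdom : IsDominant (dotAct w (-α - β - γ - δ)))
    (hne : dotAct w (-α - β - γ - δ) ≠ 0) :
    n = 6 ∧ ∀ p q : Fin n, (p : ℕ) = 2 → (q : ℕ) = 3 →
      α = posRoot p q ∧ β = posRoot p q ∧ γ = posRoot p q ∧ δ = posRoot p q := by
  have hs : ∑ k, dotAct w (-α - β - γ - δ) k = 0 := by
    rw [sum_dotAct]
    simp [Finset.sum_sub_distrib, sum_posRoot hα, sum_posRoot hβ, sum_posRoot hγ, sum_posRoot hδ]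
  have hinj := shifted_injective _ w hdom
  obtain ⟨hF, hL⟩ := dominant_ends _ hdom hs hne ⟨0, by omega⟩ ⟨n - 1, by omega⟩ rfl
    (by simp only; omega)
  simp only [dotAct, weylRho, Pi.sub_apply, Pi.neg_apply] at hF hL hinj
  generalize w⁻¹ ⟨0, by omega⟩ = k at hF
  generalize w⁻¹ ⟨n - 1, by omega⟩ = m at hL
  have hkn := k.isLt
  have hmn := m.isLt
  have bk := fun {x : Fin n → ℤ} (hx : IsPosRoot x) => posRoot_bounds hx k
  have bm := fun {x : Fin n → ℤ} (hx : IsPosRoot x) => posRoot_bounds hx m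
  have a1 := bk hα
  have a2 := bk hβ
  have a3 := bk hγ
  have a4 := bk hδ
  have b1 := bm hα
  have b2 := bm hβ
  have b3 := bm hγ
  have b4 := bm hδ
  by_cases hkm : (k : ℕ) ≤ m
  · exfalso
    have hk0 : (k : ℕ) ≠ 0 := fun h0 => by
      have := posRoot_first hα k h0
      have := posRoot_first hβ k h0
      have := posRoot_first hγ k h0
      have := posRoot_first hδ k h0
      omega
    have hm0 : (m : ℕ) + 1 ≠ n := fun h0 => by
      have := posRoot_last hα m h0
      have := posRoot_last hβ m h0
      have := posRoot_last hγ m h0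
      have := posRoot_last hδ m h0
      omega
    have c1 := posRoot_disjoint hα k m hkm
    have c2 := posRoot_disjoint hβ k m hkm
    have c3 := posRoot_disjoint hγ k m hkm
    have c4 := posRoot_disjoint hδ k m hkm
    have hk1 : (k : ℕ) = 1 := by omega
    have hm1 : (m : ℕ) + 2 = n := by omega
    have ext := fun {x : Fin n → ℤ} (hx : IsPosRoot x) =>
      posRoot_extreme (by omega) hx ⟨0, by omega⟩ k ⟨2, by omega⟩ m rfl hk1 rfl hm1
    have e1 := ext hα (by omega)
    have e2 := ext hβ (by omega)
    have e3 := ext hγ (by omega)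
    have e4 := ext hδ (by omega)
    -- Exactly two roots end at `1`, so `λ + ρ` equals `n - 3` at both `0` and `2`.
    have := hinj ⟨0, by omega⟩ ⟨2, by omega⟩ (by simp only; omega)
    simp at this
  · have h6 : n = 6 := by omega
    refine ⟨h6, fun p q hp hq => ?_⟩
    obtain rfl : p = m := Fin.ext (by omega)
    obtain rfl : q = k := Fin.ext (by omega)
    exact ⟨posRoot_eq hα _ _ (by omega) (by omega), posRoot_eq hβ _ _ (by omega) (by omega),
      posRoot_eq hγ _ _ (by omega) (by omega), posRoot_eq hδ _ _ (by omega) (by omega)⟩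

/-- The exceptional orbit for `n = 6`: sorting `-4(e_2 - e_3) + ρ = (5, 4, -1, 6, 1, 0)`. -/
lemma exceptional_orbit (w : Equiv.Perm (Fin 6)) (α : Fin 6 → ℤ) (hα : α = posRoot 2 3)
    (hdom : IsDominant (dotAct w (-α - α - α - α))) :
    dotAct w (-α - α - α - α) = (fun k : Fin 6 => if (k : ℕ) ≤ 2 then 1 else -1) ∧
      weylLen w = 5 := by
  have hv : ∀ x : Fin 6, (-α - α - α - α) x + weylRho 6 x = ![5, 4, -1, 6, 1, 0] x := by
    subst hα
    decide
  have hmu : ∀ i, dotAct w (-α - α - α - α) i = ![5, 4, -1, 6, 1, 0] (w⁻¹ i) - weylRho 6 i :=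
    fun i => by rw [← hv]; rfl
  have hstep : ∀ i j : Fin 6, i < j →
      (![5, 4, -1, 6, 1, 0] (w⁻¹ j) : ℤ) < ![5, 4, -1, 6, 1, 0] (w⁻¹ i) := fun i j hij => by
    have := hdom i j hij.le
    rw [hmu, hmu] at this
    simp only [weylRho] at this
    rw [Fin.lt_def] at hij
    omega
  have hval : ∀ x : Fin 6, ∃ y : ℤ, ![5, 4, -1, 6, 1, 0] x = y ∧
      (y = 5 ∧ x = 0 ∨ y = 4 ∧ x = 1 ∨ y = -1 ∧ x = 2 ∨ y = 6 ∧ x = 3 ∨ y = 1 ∧ x = 4 ∨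
        y = 0 ∧ x = 5) := fun x => ⟨_, rfl, by revert x; decide⟩
  have s0 := hstep 0 1 (by decide)
  have s1 := hstep 1 2 (by decide)
  have s2 := hstep 2 3 (by decide)
  have s3 := hstep 3 4 (by decide)
  have s4 := hstep 4 5 (by decide)
  obtain ⟨y0, h0, c0⟩ := hval (w⁻¹ 0)
  obtain ⟨y1, h1, c1⟩ := hval (w⁻¹ 1)
  obtain ⟨y2, h2, c2⟩ := hval (w⁻¹ 2)
  obtain ⟨y3, h3, c3⟩ := hval (w⁻¹ 3)
  obtain ⟨y4, h4, c4⟩ := hval (w⁻¹ 4)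
  obtain ⟨y5, h5, c5⟩ := hval (w⁻¹ 5)
  rw [h0, h1] at s0
  rw [h1, h2] at s1
  rw [h2, h3] at s2
  rw [h3, h4] at s3
  rw [h4, h5] at s4
  have z0 : y0 = 6 := by omega
  have z1 : y1 = 5 := by omega
  have z2 : y2 = 4 := by omega
  have z3 : y3 = 1 := by omega
  have z4 : y4 = 0 := by omega
  have z5 : y5 = -1 := by omega
  subst z0 z1 z2 z3 z4 z5
  norm_num at c0 c1 c2 c3 c4 c5
  constructor
  · funext i
    rw [hmu]
    fin_cases i <;> simp [weylRho, c0, c1, c2, c3, c4, c5]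
  · have hw : ∀ x, w x = ![1, 2, 5, 0, 3, 4] x := by
      rw [Equiv.symm_apply_eq] at c0 c1 c2 c3 c4 c5
      intro x
      fin_cases x <;> simp [← c0, ← c1, ← c2, ← c3, ← c4, ← c5]
    simp only [weylLen, hw]
    decide

/-- For positive roots α, β, γ, δ of A_{n−1} with μ = w·(−α−β−γ−δ) dominant:
if n ≥ 7 then μ = 0; if n = 6 then μ ∈ {0, (1,1,1,−1,−1,−1)}, and
μ = (1,1,1,−1,−1,−1) = α₁+2α₂+3α₃+2α₄+α₅ forces α = β = γ = δ = α₃ = e₃−e₄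
and ℓ(w) = 5. -/
theorem dot_neg_four_roots_classification (n : ℕ) (α β γ δ : Fin n → ℤ)
    (hα : IsPosRoot α) (hβ : IsPosRoot β) (hγ : IsPosRoot γ) (hδ : IsPosRoot δ)
    (w : Equiv.Perm (Fin n))
    (hdom : IsDominant (dotAct w (-α - β - γ - δ))) :
    (7 ≤ n → dotAct w (-α - β - γ - δ) = 0) ∧
    (∀ _h6 : n = 6,
      (dotAct w (-α - β - γ - δ) = 0 ∨
        dotAct w (-α - β - γ - δ) = (fun k : Fin n => if (k : ℕ) ≤ 2 then 1 else -1)) ∧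
      (dotAct w (-α - β - γ - δ) = (fun k : Fin n => if (k : ℕ) ≤ 2 then 1 else -1) →
        α = posRoot (⟨2, by omega⟩ : Fin n) (⟨3, by omega⟩ : Fin n) ∧
        β = posRoot (⟨2, by omega⟩ : Fin n) (⟨3, by omega⟩ : Fin n) ∧
        γ = posRoot (⟨2, by omega⟩ : Fin n) (⟨3, by omega⟩ : Fin n) ∧
        δ = posRoot (⟨2, by omega⟩ : Fin n) (⟨3, by omega⟩ : Fin n) ∧
        weylLen w = 5)) := by
  
  constructor
  · intro h7
    by_contra hne
    have := (nonzero_case (by omega) α β γ δ hα hβ hγ hδ w hdom hne).1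
    omega
  · rintro rfl
    by_cases hz : dotAct w (-α - β - γ - δ) = 0
    · refine ⟨Or.inl hz, fun h => ?_⟩
      have := congrFun (hz.symm.trans h) 0
      simp at this
    · obtain ⟨h1, h2, h3, h4⟩ :=
        (nonzero_case le_rfl α β γ δ hα hβ hγ hδ w hdom hz).2 2 3 rfl rfl
      rw [h2, h3, h4, ← h1] at hdom
      obtain ⟨hmu, hlen⟩ := exceptional_orbit w α h1 hdom
      refine ⟨Or.inr ?_, fun _ => ⟨h1, h2, h3, h4, hlen⟩⟩
      rw [h2, h3, h4, ← h1]
      exact hmu
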